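/- Let Ω ⊆ ℝ^m be open and let f : Ω → ℝ^{2n+1} be Lipschitz continuous as a map into the Heisenberg group ℍ^n, i.e. there is L with d_K(f(x), f(y)) ≤ L·|x−y| for all x, y ∈ Ω. Then for almost every x ∈ Ω (with respect to Lebesgue measure), f is (Fréchet) differentiable at x and the rank of the derivative Df(x) : ℝ^m → ℝ^{2n+1} is at most n. -/

import Mathlib

open Metric Set MeasureTheory Topology

/-- The index of the coordinate `x_j` in `ℝ^{2n+1}`. -/
def xI (n : ℕ) (j : Fin n) : Fin (2*n+1) := ⟨2*j.1, by have := j.2; omega⟩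

/-- The index of the coordinate `y_j` in `ℝ^{2n+1}`. -/
def yI (n : ℕ) (j : Fin n) : Fin (2*n+1) := ⟨2*j.1+1, by have := j.2; omega⟩

/-- The index of the coordinate `t` in `ℝ^{2n+1}`. -/
def tI (n : ℕ) : Fin (2*n+1) := Fin.last (2*n)

/-- The Korányi metric on the Heisenberg group `ℍ^n = ℝ^{2n+1}`:
`d_K(p,q) = (|z-z'|^4 + |t - t' + 2 ∑_j (x_j' y_j - x_j y_j')|^2)^{1/4}`. -/
noncomputable def dK (n : ℕ) (p q : EuclideanSpace ℝ (Fin (2*n+1))) : ℝ :=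
  ((∑ i : Fin (2*n), (p (Fin.castSucc i) - q (Fin.castSucc i)) ^ 2) ^ 2 +
    (p (tI n) - q (tI n) +
      2 * ∑ j : Fin n, (q (xI n j) * p (yI n j) - p (xI n j) * q (yI n j))) ^ 2) ^ ((1:ℝ)/4)

/-- A function on a normed space whose increments are given by an alternating form up to a
quadratic error forces that form to vanish, because second derivatives are symmetric. -/
theorem alternating_eq_zero_of_quadratic_error {E : Type*} [NormedAddCommGroup E]
    [NormedSpace ℝ E] (β : E →L[ℝ] E →L[ℝ] ℝ) (hβ : ∀ u, β u u = 0) (T : E → ℝ) (C : ℝ)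
    (hT : ∀ x y, |T x - T y - β y x| ≤ C * ‖x - y‖ ^ 2) (u v : E) : β u v = 0 := by
  have hderiv : ∀ y, HasFDerivAt T (β y) y := by
    intro y
    rw [hasFDerivAt_iff_isLittleO]
    have hbig : (fun x => T x - T y - β y (x - y)) =O[𝓝 y] fun x => ‖x - y‖ ^ 2 := by
      refine Asymptotics.IsBigO.of_bound C (Filter.Eventually.of_forall fun x => ?_)
      simpa [hβ] using hT x y
    refine hbig.trans_isLittleO ?_
    have hlim : Filter.Tendsto (fun x => x - y) (𝓝 y) (𝓝 0) := by
      have : Continuous fun x : E => x - y := by fun_prop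
      simpa using this.tendsto y
    exact (Asymptotics.isLittleO_norm_pow_id one_lt_two).comp_tendsto hlim
  have hsymm : β u v = β v u := second_derivative_symmetric hderiv β.hasFDerivAt (x := 0) u v
  have hadd := hβ (u + v)
  simp only [map_add, add_apply, hβ] at hadd
  linarith

/-- Let `(Z, t)` satisfy the quadratic contact inequality for an alternating form `ω`. Then the
derivative of `Z` at any point has isotropic range. -/
theorem isotropic_of_contact_inequality {E V : Type*} [NormedAddCommGroup E] [NormedSpace ℝ E]
    [NormedAddCommGroup V] [NormedSpace ℝ V] (ω : V →L[ℝ] V →L[ℝ] ℝ) (hω : ∀ p, ω p p = 0)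
    {Ω : Set E} (hΩ : IsOpen Ω) {Z : E → V} {t : E → ℝ} {C : ℝ}
    (hC : ∀ x ∈ Ω, ∀ y ∈ Ω, |t x - t y + ω (Z x) (Z y)| ≤ C * ‖x - y‖ ^ 2)
    {x₀ : E} (hx₀ : x₀ ∈ Ω) {A : E →L[ℝ] V} (hA : HasFDerivAt Z A x₀) (u v : E) :
    ω (A u) (A v) = 0 := by
  have hanti : ∀ p q, ω p q = - ω q p := by
    intro p q
    have hadd := hω (p + q)
    simp only [map_add, add_apply, hω] at hadd
    linarith
  let c : ℕ → ℝ := fun k => (k : ℝ) + 1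
  have hcpos : ∀ k, 0 < c k := fun k => by positivity
  have hctop : Filter.Tendsto c Filter.atTop Filter.atTop :=
    Filter.tendsto_atTop_add_const_right _ _ tendsto_natCast_atTop_atTop
  let P : ℕ → E → E := fun k h => x₀ + (c k)⁻¹ • h
  let S : ℕ → E → ℝ := fun k h => c k ^ 2 * (t (P k h) - t x₀ + ω (Z (P k h)) (Z x₀))
  let D : ℕ → E → V := fun k h => c k • (Z (P k h) - Z x₀)
  have hP : ∀ h, ∀ᶠ k in Filter.atTop, P k h ∈ Ω := by
    intro h
    have hlim : Filter.Tendsto (fun k => P k h) Filter.atTop (𝓝 x₀) := by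
      simpa using ((tendsto_inv_atTop_zero.comp hctop).smul_const h).const_add x₀
    exact hlim.eventually (hΩ.mem_nhds hx₀)
  have hD : ∀ h, Filter.Tendsto (fun k => D k h) Filter.atTop (𝓝 (A h)) := fun h =>
    hA.lim h (tendsto_norm_atTop_atTop.comp hctop)
  have hS : ∀ h, ∀ᶠ k in Filter.atTop, S k h ∈ Icc (-(C * ‖h‖ ^ 2)) (C * ‖h‖ ^ 2) := by
    intro h
    filter_upwards [hP h] with k hk
    have hbound := hC _ hk _ hx₀
    rw [mem_Icc, ← abs_le, abs_mul, abs_of_pos (pow_pos (hcpos k) 2)]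
    calc _ ≤ c k ^ 2 * (C * ‖P k h - x₀‖ ^ 2) := by gcongr
      _ = C * ‖h‖ ^ 2 := by
        have := (hcpos k).ne'
        simp only [P, add_sub_cancel_left, norm_smul, norm_inv, Real.norm_eq_abs,
          abs_of_pos (hcpos k)]
        field_simp
  have hSD : ∀ h h', ∀ᶠ k in Filter.atTop,
      |S k h - S k h' + ω (D k h) (D k h')| ≤ C * ‖h - h'‖ ^ 2 := by
    intro h h'
    filter_upwards [hP h, hP h'] with k hk hk'
    have hbound := hC _ hk _ hk'
    have hid : S k h - S k h' + ω (D k h) (D k h') =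
        c k ^ 2 * (t (P k h) - t (P k h') + ω (Z (P k h)) (Z (P k h'))) := by
      simp only [S, D, map_smul, map_sub, smul_apply,
        sub_apply, smul_eq_mul, hω]
      rw [hanti (Z (P k h')) (Z x₀)]
      ring
    rw [hid, abs_mul, abs_of_pos (pow_pos (hcpos k) 2)]
    calc _ ≤ c k ^ 2 * (C * ‖P k h - P k h'‖ ^ 2) := by gcongr
      _ = C * ‖h - h'‖ ^ 2 := by
        have := (hcpos k).ne'
        simp only [P, add_sub_add_left_eq_sub, ← smul_sub, norm_smul, norm_inv,
          Real.norm_eq_abs, abs_of_pos (hcpos k)]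
        field_simp
  let U : Ultrafilter ℕ := Ultrafilter.of Filter.atTop
  have hU : (U : Filter ℕ) ≤ Filter.atTop := Ultrafilter.of_le _
  have hlim : ∀ h, ∃ a, Filter.Tendsto (fun k => S k h) U (𝓝 a) := by
    intro h
    obtain ⟨a, -, ha⟩ := isCompact_Icc.ultrafilter_le_nhds' (U.map fun k => S k h) (hU (hS h))
    exact ⟨a, ha⟩
  choose T hT using hlim
  have hTA : ∀ h h', |T h - T h' - ω (A h') (A h)| ≤ C * ‖h - h'‖ ^ 2 := by
    intro h h'
    rw [hanti, sub_neg_eq_add]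
    have hcont : Continuous fun p : V × V => ω p.1 p.2 := by fun_prop
    have hωlim := (hcont.tendsto (A h, A h')).comp
      (((hD h).mono_left hU).prodMk_nhds ((hD h').mono_left hU))
    exact le_of_tendsto (((hT h).sub (hT h')).add hωlim).abs (hU (hSD h h'))
  exact alternating_eq_zero_of_quadratic_error (ω.bilinearComp A A)
    (fun p => by simp [hω]) T C (by simpa using hTA) u v

/-- The scalar component of a map satisfying the quadratic contact inequality is differentiable
wherever the vector component is. -/
theorem hasFDerivAt_of_contact_inequality {E V : Type*} [NormedAddCommGroup E] [NormedSpace ℝ E]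
    [NormedAddCommGroup V] [NormedSpace ℝ V] (ω : V →L[ℝ] V →L[ℝ] ℝ) (hω : ∀ p, ω p p = 0)
    {Ω : Set E} (hΩ : IsOpen Ω) {Z : E → V} {t : E → ℝ} {C : ℝ}
    (hC : ∀ x ∈ Ω, ∀ y ∈ Ω, |t x - t y + ω (Z x) (Z y)| ≤ C * ‖x - y‖ ^ 2)
    {x₀ : E} (hx₀ : x₀ ∈ Ω) {A : E →L[ℝ] V} (hA : HasFDerivAt Z A x₀) :
    HasFDerivAt t (-((ω.flip (Z x₀)).comp A)) x₀ := by
  have hrem : HasFDerivAt (fun x => t x + ω.flip (Z x₀) (Z x)) (0 : E →L[ℝ] ℝ) x₀ := by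
    rw [hasFDerivAt_iff_isLittleO]
    have hbig : (fun x => t x + ω.flip (Z x₀) (Z x) - (t x₀ + ω.flip (Z x₀) (Z x₀)) -
        (0 : E →L[ℝ] ℝ) (x - x₀)) =O[𝓝 x₀] fun x => ‖x - x₀‖ ^ 2 := by
      refine Asymptotics.IsBigO.of_bound C ?_
      filter_upwards [hΩ.mem_nhds hx₀] with x hx
      have hbound := hC x hx x₀ hx₀
      rw [show t x - t x₀ + ω (Z x) (Z x₀) = t x + ω (Z x) (Z x₀) - t x₀ by ring] at hbound
      simpa [hω] using hbound
    refine hbig.trans_isLittleO ?_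
    have hlim : Filter.Tendsto (fun x => x - x₀) (𝓝 x₀) (𝓝 0) := by
      have : Continuous fun x : E => x - x₀ := by fun_prop
      simpa using this.tendsto x₀
    exact (Asymptotics.isLittleO_norm_pow_id one_lt_two).comp_tendsto hlim
  have hsub := hrem.sub ((ω.flip (Z x₀)).hasFDerivAt.comp x₀ hA)
  rw [zero_sub] at hsub
  refine hsub.congr_of_eventuallyEq (Filter.Eventually.of_forall fun x => ?_)
  simp

/-- An isotropic subspace for a nondegenerate bilinear form has at most half the dimension. -/
theorem two_mul_finrank_le_of_isotropic {V : Type*} [AddCommGroup V] [Module ℝ V]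
    [FiniteDimensional ℝ V] (B : LinearMap.BilinForm ℝ V) (hB : B.Nondegenerate)
    (W : Submodule ℝ V) (hW : ∀ u ∈ W, ∀ v ∈ W, B u v = 0) :
    2 * Module.finrank ℝ W ≤ Module.finrank ℝ V := by
  have hle : W ≤ B.orthogonal W := fun v hv u hu => hW u hu v hv
  have hmono := Submodule.finrank_mono hle
  have hW_le := Submodule.finrank_le W
  rw [LinearMap.BilinForm.finrank_orthogonal hB] at hmono
  omega

/-- Twice the standard symplectic form on `ℝⁿ × ℝⁿ`, with the sign convention of `dK`. -/
noncomputable def symplecticForm (n : ℕ) :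
    LinearMap.BilinForm ℝ ((Fin n → ℝ) × (Fin n → ℝ)) :=
  LinearMap.mk₂ ℝ (fun p q => 2 * ∑ j, (q.1 j * p.2 j - p.1 j * q.2 j))
    (fun p p' q => by
      rw [← mul_add, ← Finset.sum_add_distrib]
      congr 1
      exact Finset.sum_congr rfl fun j _ => by
        simp only [Prod.fst_add, Prod.snd_add, Pi.add_apply]
        ring)
    (fun c p q => by
      rw [smul_eq_mul, mul_left_comm c, Finset.mul_sum _ _ c]
      congr 1
      exact Finset.sum_congr rfl fun j _ => by
        simp only [Prod.smul_fst, Prod.smul_snd, Pi.smul_apply, smul_eq_mul]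
        ring)
    (fun p q q' => by
      rw [← mul_add, ← Finset.sum_add_distrib]
      congr 1
      exact Finset.sum_congr rfl fun j _ => by
        simp only [Prod.fst_add, Prod.snd_add, Pi.add_apply]
        ring)
    (fun c p q => by
      rw [smul_eq_mul, mul_left_comm c, Finset.mul_sum _ _ c]
      congr 1
      exact Finset.sum_congr rfl fun j _ => by
        simp only [Prod.smul_fst, Prod.smul_snd, Pi.smul_apply, smul_eq_mul]
        ring)

theorem symplecticForm_apply (n : ℕ) (p q : (Fin n → ℝ) × (Fin n → ℝ)) :
    symplecticForm n p q = 2 * ∑ j, (q.1 j * p.2 j - p.1 j * q.2 j) := rfl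

theorem symplecticForm_isAlt (n : ℕ) : (symplecticForm n).IsAlt := by
  intro p
  simp [symplecticForm_apply, mul_comm]

theorem symplecticForm_nondegenerate (n : ℕ) : (symplecticForm n).Nondegenerate := by
  refine (symplecticForm_isAlt n).isRefl.nondegenerate_iff_separatingLeft.2 ?_
  intro p hp
  ext j
  · simpa [symplecticForm_apply, Pi.single_apply] using hp (0, Pi.single j 1)
  · simpa [symplecticForm_apply, Pi.single_apply] using hp (Pi.single j 1, 0)

/-- The coordinates `(x, y)` of a point of `ℍⁿ`. -/
noncomputable def horizontalProj (n : ℕ) :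
    EuclideanSpace ℝ (Fin (2*n+1)) →L[ℝ] (Fin n → ℝ) × (Fin n → ℝ) :=
  (ContinuousLinearMap.pi fun j => EuclideanSpace.proj (xI n j)).prod
    (ContinuousLinearMap.pi fun j => EuclideanSpace.proj (yI n j))

/-- Every coordinate of `ℝ^{2n+1}` is `t`, some `x_j` or some `y_j`. -/
theorem index_cases {n : ℕ} (i : Fin (2*n+1)) :
    i = tI n ∨ (∃ j, i = xI n j) ∨ ∃ j, i = yI n j := by
  rcases Nat.even_or_odd' i.1 with ⟨k, hk | hk⟩
  · by_cases hkn : k < n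
    · exact Or.inr (Or.inl ⟨⟨k, hkn⟩, Fin.ext hk⟩)
    · refine Or.inl (Fin.ext ?_)
      simp only [tI, Fin.val_last]
      omega
  · exact Or.inr (Or.inr ⟨⟨k, by omega⟩, Fin.ext hk⟩)

theorem sum_sq_add_sq_le_of_dK_le {n : ℕ} {p q : EuclideanSpace ℝ (Fin (2*n+1))} {r : ℝ}
    (h : dK n p q ≤ r) :
    (∑ i : Fin (2*n), (p (Fin.castSucc i) - q (Fin.castSucc i)) ^ 2) ^ 2 +
      (p (tI n) - q (tI n) + symplecticForm n (horizontalProj n p) (horizontalProj n q)) ^ 2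
        ≤ r ^ 4 := by
  rw [dK] at h
  set s := (∑ i : Fin (2*n), (p (Fin.castSucc i) - q (Fin.castSucc i)) ^ 2) ^ 2 +
    (p (tI n) - q (tI n) +
      2 * ∑ j : Fin n, (q (xI n j) * p (yI n j) - p (xI n j) * q (yI n j))) ^ 2
  have hs₀ : 0 ≤ s := by positivity
  have hpow : (s ^ ((1:ℝ)/4)) ^ 4 = s := by
    rw [← Real.rpow_natCast, ← Real.rpow_mul hs₀]
    norm_num
  calc _ = s := rfl
    _ = (s ^ ((1:ℝ)/4)) ^ 4 := hpow.symm
    _ ≤ r ^ 4 := pow_le_pow_left₀ (by positivity) h 4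

theorem abs_contact_le_of_dK_le {n : ℕ} {p q : EuclideanSpace ℝ (Fin (2*n+1))} {r : ℝ}
    (h : dK n p q ≤ r) :
    |p (tI n) - q (tI n) + symplecticForm n (horizontalProj n p) (horizontalProj n q)|
      ≤ r ^ 2 := by
  have hsum := sum_sq_add_sq_le_of_dK_le h
  refine abs_le_of_sq_le_sq ?_ (by positivity)
  nlinarith [sq_nonneg (∑ i : Fin (2*n), (p (Fin.castSucc i) - q (Fin.castSucc i)) ^ 2)]

theorem norm_horizontalProj_sub_le_of_dK_le {n : ℕ} {p q : EuclideanSpace ℝ (Fin (2*n+1))}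
    {r : ℝ} (hr : 0 ≤ r) (h : dK n p q ≤ r) :
    ‖horizontalProj n p - horizontalProj n q‖ ≤ r := by
  have hsum := sum_sq_add_sq_le_of_dK_le h
  have hsq : ∑ i : Fin (2*n), (p (Fin.castSucc i) - q (Fin.castSucc i)) ^ 2 ≤ r ^ 2 := by
    refine le_of_sq_le_sq ?_ (by positivity)
    nlinarith [sq_nonneg (p (tI n) - q (tI n) +
      symplecticForm n (horizontalProj n p) (horizontalProj n q))]
  have hcoord : ∀ i : Fin (2*n), |p (Fin.castSucc i) - q (Fin.castSucc i)| ≤ r := fun i =>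
    abs_le_of_sq_le_sq ((Finset.single_le_sum (f := fun i : Fin (2*n) =>
      (p (Fin.castSucc i) - q (Fin.castSucc i)) ^ 2) (fun _ _ => sq_nonneg _)
      (Finset.mem_univ i)).trans hsq) hr
  refine max_le ((pi_norm_le_iff_of_nonneg hr).2 fun j => ?_)
    ((pi_norm_le_iff_of_nonneg hr).2 fun j => ?_)
  · exact hcoord ⟨2*j.1, by omega⟩
  · exact hcoord ⟨2*j.1+1, by omega⟩

/-- Proposition 7.9 of the paper. A map `f : Ω → ℍ^n` that is
Lipschitz with respect to the Korányi metric is differentiable almost everywhere on `Ω`,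
with `rank Df ≤ n` almost everywhere. -/
theorem stmt14 (m n : ℕ) (Ω : Set (EuclideanSpace ℝ (Fin m))) (hΩ : IsOpen Ω)
    (f : EuclideanSpace ℝ (Fin m) → EuclideanSpace ℝ (Fin (2*n+1))) (L : ℝ)
    (hf : ∀ x ∈ Ω, ∀ y ∈ Ω, dK n (f x) (f y) ≤ L * dist x y) :
    ∀ᵐ x ∂(volume : Measure (EuclideanSpace ℝ (Fin m))), x ∈ Ω →
      DifferentiableAt ℝ f x ∧
      Module.finrank ℝ (LinearMap.range (fderiv ℝ f x).toLinearMap) ≤ n := by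
  let H := horizontalProj n
  let ω := (symplecticForm n).toContinuousBilinearMap
  have hω : ∀ p, ω p p = 0 := symplecticForm_isAlt n
  have hLip : LipschitzOnWith (Real.nnabs L) (fun x => H (f x)) Ω := by
    refine LipschitzOnWith.of_dist_le_mul fun x hx y hy => ?_
    rw [dist_eq_norm (H (f x))]
    refine norm_horizontalProj_sub_le_of_dK_le (by positivity) ((hf x hx y hy).trans ?_)
    rw [Real.coe_nnabs]
    gcongr
    exact le_abs_self L
  have hcontact : ∀ x ∈ Ω, ∀ y ∈ Ω,
      |f x (tI n) - f y (tI n) + ω (H (f x)) (H (f y))| ≤ L ^ 2 * ‖x - y‖ ^ 2 := by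
    intro x hx y hy
    rw [← mul_pow, ← dist_eq_norm]
    exact abs_contact_le_of_dK_le (hf x hx y hy)
  filter_upwards [hLip.ae_differentiableWithinAt_of_mem] with x hdiff hx
  have hA := ((hdiff hx).differentiableAt (hΩ.mem_nhds hx)).hasFDerivAt
  set A := fderiv ℝ (fun x => H (f x)) x
  have ht := hasFDerivAt_of_contact_inequality ω hω hΩ hcontact hx hA
  have hfx : DifferentiableAt ℝ f x := by
    rw [differentiableAt_euclidean]
    intro i
    rcases index_cases i with rfl | ⟨j, rfl⟩ | ⟨j, rfl⟩
    · exact ht.differentiableAt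
    · exact differentiableAt_pi.1 hA.differentiableAt.fst j
    · exact differentiableAt_pi.1 hA.differentiableAt.snd j
  refine ⟨hfx, ?_⟩
  set D := fderiv ℝ f x
  have hD : HasFDerivAt f D x := hfx.hasFDerivAt
  have hHD : ∀ h, H (D h) = A h := fun h =>
    DFunLike.congr_fun ((H.hasFDerivAt.comp x hD).unique hA) h
  have htD : ∀ h, D h (tI n) = -ω (A h) (H (f x)) := fun h =>
    DFunLike.congr_fun (((EuclideanSpace.proj (𝕜 := ℝ) (tI n)).hasFDerivAt.comp x hD).unique ht) h
  let R := LinearMap.range D.toLinearMap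
  have hinj : Function.Injective (H.toLinearMap.domRestrict R) := by
    rw [← LinearMap.ker_eq_bot, LinearMap.ker_eq_bot']
    rintro ⟨-, h, rfl⟩ hh
    have hzero : H (D h) = 0 := hh
    refine Subtype.ext (PiLp.ext fun i => ?_)
    rcases index_cases i with rfl | ⟨j, rfl⟩ | ⟨j, rfl⟩
    · simpa [← hHD, hzero] using htD h
    · exact congrFun (congrArg Prod.fst hzero) j
    · exact congrFun (congrArg Prod.snd hzero) j
  have hiso : ∀ u ∈ LinearMap.range (H.toLinearMap.domRestrict R),
      ∀ v ∈ LinearMap.range (H.toLinearMap.domRestrict R), symplecticForm n u v = 0 := by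
    rintro - ⟨⟨-, h, rfl⟩, rfl⟩ - ⟨⟨-, k, rfl⟩, rfl⟩
    change ω (H (D h)) (H (D k)) = 0
    rw [hHD, hHD]
    exact isotropic_of_contact_inequality ω hω hΩ hcontact hx hA h k
  have hrank := two_mul_finrank_le_of_isotropic _ (symplecticForm_nondegenerate n) _ hiso
  rw [LinearMap.finrank_range_of_inj hinj, Module.finrank_prod, Module.finrank_fin_fun] at hrank
  change Module.finrank ℝ R ≤ n
  omega
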